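/- Fubini for series, iterated representation: Let (Γ, μ) and (Γ', ν) be σ-finite measure spaces and φ : Γ × Γ' → ℂ[X, X⁻¹] a map such that for every m ∈ ℤ the function (x, x') ↦ coeff_m(φ(x, x')) is measurable on the product. Let z ∈ ℂ \ {0} and assume: (a) ∫_{Γ×Γ'} |coeff_m(φ(x, x'))| d(μ×ν) < ∞ for all m ∈ ℤ; (b) Σ_{m∈ℤ} |z|^m ∫_{Γ×Γ'} |coeff_m(φ(x, x'))| d(μ×ν) < ∞; (c) ∫_{Γ×Γ'} |ev_z(φ(x, x'))| d(μ×ν) < ∞; (d) every x ∈ Γ admits a measurable set N ⊆ Γ with x ∈ N, 0 < μ(N) < ∞, and φ(n, x') = φ(x, x') for all n ∈ N, x' ∈ Γ'. Assume further that for every x ∈ Γ the inner series has finitely many nonzero coefficients, i.e. there is a Laurent polynomial ψ(x) ∈ ℂ[X, X⁻¹] with coeff_m(ψ(x)) = ∫_{Γ'} coeff_m(φ(x, x')) dν(x') for all m ∈ ℤ. Then: (i) ∫_Γ |coeff_m(ψ(x))| dμ(x) < ∞ for all m ∈ ℤ; (ii) ∫_Γ coeff_m(ψ(x)) dμ(x)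 = ∫_{Γ×Γ'} coeff_m(φ(x, x')) d(μ×ν) for all m ∈ ℤ; (iii) Σ_{m∈ℤ} |z|^m ∫_Γ |coeff_m(ψ(x))| dμ(x) < ∞; (iv) ∫_Γ |ev_z(ψ(x))| dμ(x) < ∞ and Σ_{m∈ℤ} z^m ∫_Γ coeff_m(ψ(x)) dμ(x) = ∫_{Γ×Γ'} ev_z(φ(x, x')) d(μ×ν). -/

import Mathlib

open MeasureTheory

/-- Evaluation of a Laurent polynomial `p ∈ ℂ[X, X⁻¹]` (modelled as `ℤ →₀ ℂ`)
at a nonzero complex number `z`: `ev_z(p) = Σ_m coeff_m(p) z^m` (a finite sum). -/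
noncomputable def evz (z : ℂ) (p : ℤ →₀ ℂ) : ℂ :=
  p.sum fun m a => a * z ^ m

/-!
Monotone convergence bounds the integral of `|ev_z ∘ φ|` by `Σ_m |z|^m ∫ |coeff_m ∘ φ|`, so a
series that converges strongly at `z` always represents the integral of `ev_z ∘ φ`. Integrating
out the second variable preserves every coefficient integral and can only decrease the integral
of its absolute value. Hence the series of `ψ` is strongly convergent as well and has the same
value at `z` as the series of `φ`.
-/

section HasSum

variable {α ι E : Type*} [MeasurableSpace α] {μ : Measure α} [Countable ι]
  [NormedAddCommGroup E] {F : ι → α → E} {f : α → E}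

theorem integrable_of_ae_hasSum (hF_int : ∀ i, Integrable (F i) μ)
    (hF_sum : Summable fun i => ∫ a, ‖F i a‖ ∂μ) (hf : ∀ᵐ a ∂μ, HasSum (F · a) (f a)) :
    Integrable f μ := by
  have hmeas : AEStronglyMeasurable f μ :=
    aestronglyMeasurable_of_tendsto_ae Filter.atTop
      (fun s => s.aestronglyMeasurable_fun_sum fun i _ => (hF_int i).aestronglyMeasurable) hf
  refine ⟨hmeas, ?_⟩
  calc ∫⁻ a, ‖f a‖ₑ ∂μ
      ≤ ∫⁻ a, ∑' i, ‖F i a‖ₑ ∂μ :=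
        lintegral_mono_ae <| hf.mono fun a ha => ha.tsum_eq ▸ enorm_tsum_le_tsum_enorm
    _ = ∑' i, ∫⁻ a, ‖F i a‖ₑ ∂μ := lintegral_tsum fun i => (hF_int i).aestronglyMeasurable.enorm
    _ = ∑' i, ENNReal.ofReal (∫ a, ‖F i a‖ ∂μ) :=
        tsum_congr fun i => (ofReal_integral_norm_eq_lintegral_enorm (hF_int i)).symm
    _ < ⊤ := hF_sum.tsum_ofReal_lt_top

theorem hasSum_integral_of_ae_hasSum [NormedSpace ℝ E] (hF_int : ∀ i, Integrable (F i) μ)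
    (hF_sum : Summable fun i => ∫ a, ‖F i a‖ ∂μ) (hf : ∀ᵐ a ∂μ, HasSum (F · a) (f a)) :
    HasSum (fun i => ∫ a, F i a ∂μ) (∫ a, f a ∂μ) := by
  rw [integral_congr_ae (hf.mono fun a ha => ha.tsum_eq.symm)]
  exact hasSum_integral_of_summable_integral_norm hF_int hF_sum

end HasSum

theorem integral_norm_integral_prod_le {α β E : Type*} [MeasurableSpace α] [MeasurableSpace β]
    {μ : Measure α} {ν : Measure β} [SFinite μ] [SFinite ν] [NormedAddCommGroup E]
    [NormedSpace ℝ E] {f : α × β → E} (hf : Integrable f (μ.prod ν)) :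
    ∫ x, ‖∫ y, f (x, y) ∂ν‖ ∂μ ≤ ∫ p, ‖f p‖ ∂μ.prod ν := by
  rw [integral_prod _ hf.norm]
  exact integral_mono hf.integral_prod_left.norm hf.integral_norm_prod_left
    fun x => norm_integral_le_integral_norm _

theorem hasSum_evz (z : ℂ) (p : ℤ →₀ ℂ) : HasSum (fun m => z ^ m * p m) (evz z p) := by
  have evz_eq_sum : evz z p = ∑ m ∈ p.support, z ^ m * p m :=
    Finset.sum_congr rfl fun m _ => mul_comm _ _
  rw [evz_eq_sum]
  refine hasSum_sum_of_ne_finset_zero fun m hm => ?_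
  rw [Finsupp.notMem_support_iff.mp hm, mul_zero]

/-- The series `Σ_φ` of a Laurent-polynomial-valued map `φ` is defined, i.e. all coefficient
functions of `φ` are absolutely integrable, and it is strongly convergent at `z`. -/
structure StronglyConvergentAt {α : Type*} [MeasurableSpace α] (φ : α → ℤ →₀ ℂ) (μ : Measure α)
    (z : ℂ) : Prop where
  integrable_coeff : ∀ m, Integrable (fun x => φ x m) μ
  summable : Summable fun m : ℤ => ‖z‖ ^ m * ∫ x, ‖φ x m‖ ∂μ

namespace StronglyConvergentAt

section Evaluation

variable {α : Type*} [MeasurableSpace α] {μ : Measure α} {φ : α → ℤ →₀ ℂ} {z : ℂ}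

theorem summable_integral_norm_zpow_mul (h : StronglyConvergentAt φ μ z) :
    Summable fun m : ℤ => ∫ x, ‖z ^ m * φ x m‖ ∂μ := by
  simpa only [norm_mul, norm_zpow, integral_const_mul] using h.summable

theorem integrable_evz (h : StronglyConvergentAt φ μ z) : Integrable (fun x => evz z (φ x)) μ :=
  integrable_of_ae_hasSum (fun m => (h.integrable_coeff m).const_mul (z ^ m))
    h.summable_integral_norm_zpow_mul (.of_forall fun x => hasSum_evz z (φ x))

theorem hasSum_integral_evz (h : StronglyConvergentAt φ μ z) :
    HasSum (fun m : ℤ => z ^ m * ∫ x, φ x m ∂μ) (∫ x, evz z (φ x) ∂μ) := by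
  simpa only [integral_const_mul] using
    hasSum_integral_of_ae_hasSum (fun m => (h.integrable_coeff m).const_mul (z ^ m))
      h.summable_integral_norm_zpow_mul (.of_forall fun x => hasSum_evz z (φ x))

end Evaluation

section Prod

variable {α β : Type*} [MeasurableSpace α] [MeasurableSpace β] {μ : Measure α} {ν : Measure β}
  [SFinite μ] [SFinite ν] {φ : α × β → ℤ →₀ ℂ} {ψ : α → ℤ →₀ ℂ} {z : ℂ}

theorem of_ae_eq_integral_prod (h : StronglyConvergentAt φ (μ.prod ν) z)
    (hψ : ∀ m, ∀ᵐ x ∂μ, ψ x m = ∫ y, φ (x, y) m ∂ν) : StronglyConvergentAt ψ μ z where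
  integrable_coeff m := (h.integrable_coeff m).integral_prod_left.congr (.symm (hψ m))
  summable := by
    have norm_le (m : ℤ) : ∫ x, ‖ψ x m‖ ∂μ ≤ ∫ p, ‖φ p m‖ ∂μ.prod ν := by
      rw [integral_congr_ae ((hψ m).mono fun x hx => congrArg norm hx)]
      exact integral_norm_integral_prod_le (h.integrable_coeff m)
    refine h.summable.of_nonneg_of_le (fun m => by positivity) fun m => ?_
    gcongr
    exact norm_le m

theorem integral_coeff_eq_integral_prod (h : StronglyConvergentAt φ (μ.prod ν) z)
    (hψ : ∀ m, ∀ᵐ x ∂μ, ψ x m = ∫ y, φ (x, y) m ∂ν) (m : ℤ) :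
    ∫ x, ψ x m ∂μ = ∫ p, φ p m ∂μ.prod ν := by
  rw [integral_congr_ae (hψ m), integral_prod _ (h.integrable_coeff m)]

end Prod

end StronglyConvergentAt

theorem series_fubini_iterated_general {Γ Γ' : Type*} [MeasurableSpace Γ] [MeasurableSpace Γ']
    {μ : Measure Γ} {ν : Measure Γ'} [SFinite μ] [SFinite ν] {φ : Γ × Γ' → ℤ →₀ ℂ} {z : ℂˣ}
    (hφ : StronglyConvergentAt φ (μ.prod ν) z) {ψ : Γ → ℤ →₀ ℂ}
    (hψ : ∀ m, ∀ᵐ x ∂μ, ψ x m = ∫ x', φ (x, x') m ∂ν) :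
    StronglyConvergentAt ψ μ z ∧
    (∀ m, ∫ x, ψ x m ∂μ = ∫ p, φ p m ∂μ.prod ν) ∧
    Integrable (fun x => evz z (ψ x)) μ ∧
    Integrable (fun p => evz z (φ p)) (μ.prod ν) ∧
    HasSum (fun m : ℤ => (z : ℂ) ^ m * ∫ x, ψ x m ∂μ) (∫ p, evz z (φ p) ∂μ.prod ν) := by
  have hψ_conv := hφ.of_ae_eq_integral_prod hψ
  have integral_coeff_eq := hφ.integral_coeff_eq_integral_prod hψ
  refine ⟨hψ_conv, integral_coeff_eq, hψ_conv.integrable_evz, hφ.integrable_evz, ?_⟩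
  simpa only [integral_coeff_eq] using hφ.hasSum_integral_evz

/-- Fubini for series, iterated representation: suppose the coefficient series of
`φ : Γ × Γ' → ℂ[X, X⁻¹]` is defined, strongly convergent at `z ≠ 0`, `ev_z ∘ φ` is
integrable on the product, `φ` is "smooth" in the first variable, and every inner series
has finitely many nonzero coefficients, given by a Laurent polynomial `ψ x`. Then the
series of `ψ` is defined, coincides coefficientwise with the series of `φ`, is strongly
convergent at `z`, and represents the integral of `ev_z ∘ φ` over the product. -/
theorem series_fubini_iterated
    {Γ Γ' : Type*} [MeasurableSpace Γ] [MeasurableSpace Γ']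
    (μ : Measure Γ) (ν : Measure Γ') [SigmaFinite μ] [SigmaFinite ν]
    (φ : Γ × Γ' → ℤ →₀ ℂ)
    (hmeas : ∀ m : ℤ, Measurable fun p : Γ × Γ' => φ p m)
    (z : ℂ) (hz : z ≠ 0)
    (hcoeff : ∀ m : ℤ, Integrable (fun p : Γ × Γ' => φ p m) (μ.prod ν))
    (hstrong : Summable fun m : ℤ => ‖z‖ ^ m * ∫ p, ‖φ p m‖ ∂(μ.prod ν))
    (hint : Integrable (fun p : Γ × Γ' => evz z (φ p)) (μ.prod ν))
    (hsmooth : ∀ x : Γ, ∃ N : Set Γ, MeasurableSet N ∧ x ∈ N ∧ 0 < μ N ∧ μ N < ⊤ ∧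
      ∀ n ∈ N, ∀ x' : Γ', φ (n, x') = φ (x, x'))
    (ψ : Γ → ℤ →₀ ℂ)
    (hψ : ∀ (x : Γ) (m : ℤ), ψ x m = ∫ x', φ (x, x') m ∂ν) :
    (∀ m : ℤ, Integrable (fun x => ψ x m) μ) ∧
    (∀ m : ℤ, ∫ x, ψ x m ∂μ = ∫ p, φ p m ∂(μ.prod ν)) ∧
    (Summable fun m : ℤ => ‖z‖ ^ m * ∫ x, ‖ψ x m‖ ∂μ) ∧
    Integrable (fun x => evz z (ψ x)) μ ∧
    ∑' m : ℤ, z ^ m * ∫ x, ψ x m ∂μ = ∫ p, evz z (φ p) ∂(μ.prod ν) := by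
  obtain ⟨⟨hψ_int, hψ_sum⟩, hψ_eq, hev, -, hrep⟩ := series_fubini_iterated_general
    (z := Units.mk0 z hz) ⟨hcoeff, hstrong⟩ fun m => .of_forall fun x => hψ x m
  exact ⟨hψ_int, hψ_eq, hψ_sum, hev, hrep.tsum_eq⟩
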